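/- (Quasipolynomial Bogolyubov-Ruzsa Lemma) There exists an absolute constant C > 0 such that the following holds. Let α ∈ (0,1] and let A ⊆ F_2^n satisfy |A| ≥ α·2^n. Then there exists a linear subspace V of F_2^n with V ⊆ A + A + A + A and codimension codim(V) = n − dim(V) ≤ C·(log(2/α))⁴. -/

import Mathlib

open scoped Pointwise

/-!
Let `F y` be the proportion of the `a ∈ A` with `y - a ∈ A - A`, so that `F = 1` on `A`. Averaging
over `k` random elements of `A` instead of all of them changes `F` very little outside few points
(Hoeffding), and pigeonholing the translates of the random samples yields a large set `X` of almost
periods of `F` (Croot–Sisask). Sums of `t` almost periods are still almost periods, hence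
`a - b + x₁ + ⋯ + x_t` lies in `A - A` for at least three quarters of the choices of `a, b ∈ A` and
`x₁, …, x_t ∈ X`.

In the Fourier expansion of this count, a character at which the sum over `X` is at most half of
its trivial bound contributes a factor `2⁻ᵗ`. Translating by a `v` that is annihilated by all other
characters, the large spectrum of `X`, therefore barely changes the count, so that some sum `w` has
both `w` and `w + v` in `A - A`, whence `v ∈ A + A - A - A`. By Chang's theorem the large spectrum
of `X` is spanned by `O(log (|G| / |X|)) = O(k log (1 / α))` characters. Taking
`t = O(log (2 / α))` and `k = O(log (2 / α) ^ 3)` makes this `O(log (2 / α) ^ 4)`.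
-/

section Sampling

open Finset Real
open scoped BigOperators

section Hoeffding

variable {β : Type*} {A : Finset β} {f : β → ℝ}

theorem sum_exp_mul_sum_le (hf : ∀ a ∈ A, |f a| ≤ 1) (hf₀ : ∑ a ∈ A, f a = 0) (k : ℕ) (l : ℝ) :
    ∑ p ∈ Fintype.piFinset fun _ : Fin k ↦ A, exp (l * ∑ i, f (p i)) ≤
      #A ^ k * exp (l ^ 2 / 2 * k) := by
  calc ∑ p ∈ Fintype.piFinset fun _ : Fin k ↦ A, exp (l * ∑ i, f (p i))
      = (∑ a ∈ A, exp (f a * l)) ^ k := by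
        simp_rw [sum_pow', ← exp_sum, ← sum_mul, mul_comm l]
    _ ≤ (∑ a ∈ A, (cosh l + f a * sinh l)) ^ k := by
        gcongr with a ha
        exact exp_mul_le_cosh_add_mul_sinh (hf a ha) l
    _ = (#A * cosh l) ^ k := by
        rw [sum_add_distrib, ← sum_mul, hf₀, zero_mul, add_zero, sum_const, nsmul_eq_mul]
    _ ≤ (#A * exp (l ^ 2 / 2)) ^ k := by
        gcongr
        exact cosh_le_exp_half_sq l
    _ = #A ^ k * exp (l ^ 2 / 2 * k) := by rw [mul_pow, mul_comm _ (k : ℝ), exp_nat_mul]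

theorem card_filter_lt_sum_le (hf : ∀ a ∈ A, |f a| ≤ 1) (hf₀ : ∑ a ∈ A, f a = 0) (k : ℕ)
    {ε : ℝ} (hε : 0 ≤ ε) :
    (#{p ∈ Fintype.piFinset fun _ : Fin k ↦ A | ε * k < ∑ i, f (p i)} : ℝ) ≤
      exp (-(ε ^ 2 / 2 * k)) * #A ^ k := by
  set S := {p ∈ Fintype.piFinset fun _ : Fin k ↦ A | ε * k < ∑ i, f (p i)}
  have chernoff : #S * exp (ε ^ 2 * k) ≤ #A ^ k * exp (ε ^ 2 / 2 * k) :=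
    calc #S * exp (ε ^ 2 * k)
        = ∑ p ∈ S, exp (ε ^ 2 * k) := by rw [sum_const, nsmul_eq_mul]
      _ ≤ ∑ p ∈ S, exp (ε * ∑ i, f (p i)) := by
          refine sum_le_sum fun p hp ↦ exp_le_exp.2 ?_
          rw [sq, mul_assoc]
          exact mul_le_mul_of_nonneg_left (mem_filter.1 hp).2.le hε
      _ ≤ ∑ p ∈ Fintype.piFinset fun _ : Fin k ↦ A, exp (ε * ∑ i, f (p i)) :=
          sum_le_sum_of_subset_of_nonneg (filter_subset _ _) fun _ _ _ ↦ (exp_pos _).le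
      _ ≤ #A ^ k * exp (ε ^ 2 / 2 * k) := sum_exp_mul_sum_le hf hf₀ k ε
  have hexp : exp (ε ^ 2 * k) = exp (ε ^ 2 / 2 * k) * exp (ε ^ 2 / 2 * k) := by
    rw [← exp_add]
    ring_nf
  rw [hexp, ← mul_assoc] at chernoff
  rw [exp_neg, mul_comm, ← div_eq_mul_inv, le_div_iff₀ (exp_pos _)]
  exact le_of_mul_le_mul_right chernoff (exp_pos _)

theorem card_filter_lt_dist_expect_le (hA : A.Nonempty) (hf : ∀ a, f a ∈ Set.Icc 0 1)
    {k : ℕ} (hk : k ≠ 0) {ε : ℝ} (hε : 0 ≤ ε) :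
    (#{p ∈ Fintype.piFinset fun _ : Fin k ↦ A | ε < dist (𝔼 i, f (p i)) (𝔼 a ∈ A, f a)} : ℝ) ≤
      2 * exp (-(ε ^ 2 / 2 * k)) * #A ^ k := by
  classical
  set μ := 𝔼 a ∈ A, f a with hμ
  have hk₀ : (0 : ℝ) < k := by positivity
  have hμ₀ : 0 ≤ μ := expect_nonneg fun a _ ↦ (hf a).1
  have hμ₁ : μ ≤ 1 := expect_le hA fun a _ ↦ (hf a).2
  have hbound (a : β) : |f a - μ| ≤ 1 :=
    abs_sub_le_iff.2 ⟨by linarith [(hf a).2], by linarith [(hf a).1]⟩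
  have hbound' (a : β) : |μ - f a| ≤ 1 := abs_sub_comm μ (f a) ▸ hbound a
  have hmean : ∑ a ∈ A, (f a - μ) = 0 := by
    rw [sum_sub_distrib, sum_const, nsmul_eq_mul, hμ, card_mul_expect, sub_self]
  have hmean' : ∑ a ∈ A, (μ - f a) = 0 := by
    rw [sum_sub_distrib, sum_const, nsmul_eq_mul, hμ, card_mul_expect, sub_self]
  have hsplit : {p ∈ Fintype.piFinset fun _ : Fin k ↦ A | ε < dist (𝔼 i, f (p i)) μ} ⊆
      {p ∈ Fintype.piFinset fun _ : Fin k ↦ A | ε * k < ∑ i, (f (p i) - μ)} ∪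
        {p ∈ Fintype.piFinset fun _ : Fin k ↦ A | ε * k < ∑ i, (μ - f (p i))} := by
    rw [← filter_or]
    refine monotone_filter_right _ fun p _ hp ↦ ?_
    simp only [Real.dist_eq, Fintype.expect_eq_sum_div_card, Fintype.card_fin, lt_abs, neg_sub]
      at hp
    simp only [sum_sub_distrib, sum_const, card_univ, Fintype.card_fin, nsmul_eq_mul]
    rw [lt_sub_iff_add_lt, lt_div_iff₀ hk₀, lt_sub_comm, div_lt_iff₀ hk₀] at hp
    exact hp.imp (fun h ↦ by linarith) fun h ↦ by linarith
  have hcard := (card_le_card hsplit).trans (card_union_le _ _)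
  calc _ ≤ (_ + _ : ℝ) := mod_cast hcard
    _ ≤ exp (-(ε ^ 2 / 2 * k)) * #A ^ k + exp (-(ε ^ 2 / 2 * k)) * #A ^ k :=
        add_le_add (card_filter_lt_sum_le (fun a _ ↦ hbound a) hmean k hε)
          (card_filter_lt_sum_le (fun a _ ↦ hbound' a) hmean' k hε)
    _ = 2 * exp (-(ε ^ 2 / 2 * k)) * #A ^ k := by ring

end Hoeffding

section DoubleCounting

theorem card_le_two_mul_card_filter_card_le {β γ : Type*} {P : Finset β} {Y : Finset γ}
    (hY : Y.Nonempty) {R : β → γ → Prop} [∀ p y, Decidable (R p y)] {w : ℝ} (hw : 0 < w)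
    (h : ∀ y ∈ Y, (#{p ∈ P | R p y} : ℝ) ≤ w * #P) :
    (#P : ℝ) ≤ 2 * #{p ∈ P | (#{y ∈ Y | R p y} : ℝ) ≤ 2 * w * #Y} := by
  set bad := {p ∈ P | ¬ (#{y ∈ Y | R p y} : ℝ) ≤ 2 * w * #Y}
  have hsum : #bad * (2 * w * #Y) ≤ #P * (w * #Y) :=
    calc #bad * (2 * w * #Y)
        = ∑ p ∈ bad, 2 * w * (#Y : ℝ) := by rw [sum_const, nsmul_eq_mul]
      _ ≤ ∑ p ∈ bad, (#{y ∈ Y | R p y} : ℝ) :=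
          sum_le_sum fun p hp ↦ (not_le.1 (mem_filter.1 hp).2).le
      _ ≤ ∑ p ∈ P, (#{y ∈ Y | R p y} : ℝ) :=
          sum_le_sum_of_subset_of_nonneg (filter_subset _ _) fun _ _ _ ↦ Nat.cast_nonneg _
      _ = ∑ y ∈ Y, (#{p ∈ P | R p y} : ℝ) :=
          mod_cast sum_card_bipartiteAbove_eq_sum_card_bipartiteBelow R
      _ ≤ ∑ _y ∈ Y, w * (#P : ℝ) := sum_le_sum h
      _ = #P * (w * #Y) := by rw [sum_const, nsmul_eq_mul]; ring
  have hwY : 0 < w * #Y := mul_pos hw (mod_cast hY.card_pos)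
  have hhalf : 2 * (#bad : ℝ) ≤ #P := le_of_mul_le_mul_right (by linarith) hwY
  have hpart : (#{p ∈ P | (#{y ∈ Y | R p y} : ℝ) ≤ 2 * w * #Y} + #bad : ℝ) = #P :=
    mod_cast card_filter_add_card_filter_not (s := P) _
  linarith

theorem exists_card_mul_card_le_card_mul_card_filter_add_mem {β Γ : Type*} [Fintype β]
    [AddGroup Γ] [Fintype Γ] [DecidableEq Γ] (φ : β → Γ) (L : Finset Γ) :
    ∃ c, Fintype.card β * #L ≤ Fintype.card Γ * #{x | c + φ x ∈ L} := by
  have hfiber (x : β) : #{c | c + φ x ∈ L} = #L :=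
    card_equiv (Equiv.addRight (φ x)) fun c ↦ by
      simp only [mem_filter, mem_univ, true_and, Equiv.coe_addRight]
  have hcount : ∑ c, #{x | c + φ x ∈ L} = Fintype.card β * #L := by
    rw [← card_univ, ← smul_eq_mul, ← sum_const, ← sum_congr rfl fun x _ ↦ hfiber x]
    exact sum_card_bipartiteAbove_eq_sum_card_bipartiteBelow fun c x ↦ c + φ x ∈ L
  obtain ⟨c, -, hc⟩ := exists_le_of_sum_le (s := univ) univ_nonempty
    (f := fun _ : Γ ↦ Fintype.card β * #L) (g := fun c ↦ Fintype.card Γ * #{x | c + φ x ∈ L}) <| by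
      rw [sum_const, card_univ, smul_eq_mul, ← mul_sum, hcount]
  exact ⟨c, hc⟩

end DoubleCounting

end Sampling

section AlmostPeriods

open Finset Real
open scoped BigOperators

section CloseOffFew

variable {β M : Type*} [Fintype β] [PseudoMetricSpace M] {f g h : β → M} {δ δ₁ δ₂ B B₁ B₂ : ℝ}

/-- `CloseOffFew δ B f g` says that `f` and `g` are uniformly within `δ` of each other outside an
exceptional set of at most `B` points. It is the approximate equality used for almost periods;
the exceptional set is counted rather than measured, so that `B` scales with the domain. -/
def CloseOffFew (δ B : ℝ) (f g : β → M) : Prop :=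
  (#{y | δ < dist (f y) (g y)} : ℝ) ≤ B

namespace CloseOffFew

noncomputable instance : Decidable (CloseOffFew δ B f g) :=
  Real.decidableLE _ _

theorem mono (hfg : CloseOffFew δ B₁ f g) (hB : B₁ ≤ B₂) : CloseOffFew δ B₂ f g :=
  le_trans hfg hB

theorem symm (hfg : CloseOffFew δ B f g) : CloseOffFew δ B g f := by
  simpa only [CloseOffFew, dist_comm] using hfg

theorem trans (hfg : CloseOffFew δ₁ B₁ f g) (hgh : CloseOffFew δ₂ B₂ g h) :
    CloseOffFew (δ₁ + δ₂) (B₁ + B₂) f h := by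
  classical
  have hsub : ({y | δ₁ + δ₂ < dist (f y) (h y)} : Finset β) ⊆
      ({y | δ₁ < dist (f y) (g y)} : Finset β) ∪ ({y | δ₂ < dist (g y) (h y)} : Finset β) := by
    rw [← filter_or]
    refine monotone_filter_right _ fun y _ hy ↦ ?_
    by_contra! hle
    exact hy.not_ge ((dist_triangle _ _ _).trans (add_le_add hle.1 hle.2))
  have hcard := (card_le_card hsub).trans (card_union_le _ _)
  calc (#{y | δ₁ + δ₂ < dist (f y) (h y)} : ℝ)
      ≤ #{y | δ₁ < dist (f y) (g y)} + #{y | δ₂ < dist (g y) (h y)} := mod_cast hcard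
    _ ≤ B₁ + B₂ := add_le_add hfg hgh

theorem comp_equiv {γ : Type*} [Fintype γ] (hfg : CloseOffFew δ B f g) (e : γ ≃ β) :
    CloseOffFew δ B (fun y ↦ f (e y)) fun y ↦ g (e y) := by
  classical
  refine le_trans (le_of_eq ?_) hfg
  exact congrArg _ (card_equiv e fun y ↦ by simp only [mem_filter, mem_univ, true_and])

end CloseOffFew

end CloseOffFew

section IsAlmostPeriod

variable {G M : Type*} [AddCommGroup G] [Fintype G] [PseudoMetricSpace M] {F : G → M}
  {δ δ₁ δ₂ B B₁ B₂ : ℝ} {x y : G}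

/-- `x` is an almost period of `F` if translating by `x` moves `F` by at most `δ` outside at most
`B` points. -/
def IsAlmostPeriod (F : G → M) (δ B : ℝ) (x : G) : Prop :=
  CloseOffFew δ B (fun y ↦ F (y + x)) F

theorem isAlmostPeriod_zero (F : G → M) : IsAlmostPeriod F 0 0 0 := by
  simp [IsAlmostPeriod, CloseOffFew]

theorem IsAlmostPeriod.add (hx : IsAlmostPeriod F δ₁ B₁ x) (hy : IsAlmostPeriod F δ₂ B₂ y) :
    IsAlmostPeriod F (δ₁ + δ₂) (B₁ + B₂) (x + y) := by
  have hxy := (hx.comp_equiv (Equiv.addRight y)).trans hy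
  simpa only [IsAlmostPeriod, Equiv.coe_addRight, add_assoc, add_comm y x] using hxy

theorem isAlmostPeriod_sum {ι : Type*} {s : Finset ι} {p : ι → G}
    (hp : ∀ i ∈ s, IsAlmostPeriod F δ B (p i)) :
    IsAlmostPeriod F (#s * δ) (#s * B) (∑ i ∈ s, p i) := by
  classical
  induction s using Finset.induction_on with
  | empty => simpa using isAlmostPeriod_zero F
  | insert i s hi ih =>
    have hadd := (hp i (mem_insert_self i s)).add (ih fun j hj ↦ hp j (mem_insert_of_mem hj))
    convert hadd using 1
    · rw [card_insert_of_notMem hi]; push_cast; ring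
    · rw [card_insert_of_notMem hi]; push_cast; ring
    · exact sum_insert hi

theorem IsAlmostPeriod.le_sum {F : G → ℝ} (hx : IsAlmostPeriod F δ B x) (hδ : 0 ≤ δ) (hF : 0 ≤ F)
    {A : Finset G} (hA : ∀ a ∈ A, F a = 1) : #A * (1 - δ) - B ≤ ∑ a ∈ A, F (a + x) := by
  classical
  set bad := ({y | δ < dist (F (y + x)) (F y)} : Finset G) with hbad
  have hpoint (a : G) (ha : a ∈ A) : (1 - δ) - (if a ∈ bad then 1 else 0) ≤ F (a + x) := by
    split_ifs with h
    · linarith [show 0 ≤ F (a + x) from hF _]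
    · rw [hbad, mem_filter_univ, not_lt, Real.dist_eq, hA a ha] at h
      linarith [neg_le_of_abs_le h]
  have hcard : (#{a ∈ A | a ∈ bad} : ℝ) ≤ B :=
    (Nat.cast_le.2 <| card_le_card fun a ha ↦ (mem_filter.1 ha).2).trans hx
  calc #A * (1 - δ) - B ≤ #A * (1 - δ) - #{a ∈ A | a ∈ bad} := by linarith
    _ = ∑ a ∈ A, ((1 - δ) - (if a ∈ bad then 1 else 0)) := by
        rw [sum_sub_distrib, sum_const, nsmul_eq_mul, sum_boole]
    _ ≤ ∑ a ∈ A, F (a + x) := sum_le_sum hpoint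

end IsAlmostPeriod

section CrootSisask

variable {G : Type*} [AddCommGroup G] {A : Finset G} {g : G → ℝ}

/-- The average of the translates of `g` by the elements of `A`, i.e. the convolution of `g` with
the uniform probability measure on `A`. -/
noncomputable def translateAvg (A : Finset G) (g : G → ℝ) (y : G) : ℝ :=
  𝔼 a ∈ A, g (y - a)

variable [Fintype G] {k : ℕ} {ε : ℝ}

/-- The `k`-tuples in `A` along which the empirical average of the translates of `g` approximates
the true average `translateAvg A g`. -/
noncomputable def goodSamples (A : Finset G) (g : G → ℝ) (k : ℕ) (δ B : ℝ) :
    Finset (Fin k → G) :=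
  {p ∈ Fintype.piFinset fun _ ↦ A |
    CloseOffFew δ B (fun y ↦ 𝔼 i, g (y - p i)) (translateAvg A g)}

theorem card_pow_le_two_mul_card_goodSamples (hA : A.Nonempty) (hg : ∀ a, g a ∈ Set.Icc 0 1)
    (hk : k ≠ 0) (hε : 0 ≤ ε) :
    (#A ^ k : ℝ) ≤
      2 * #(goodSamples A g k ε (4 * exp (-(ε ^ 2 / 2 * k)) * Fintype.card G)) := by
  have hmarkov := card_le_two_mul_card_filter_card_le (P := Fintype.piFinset fun _ : Fin k ↦ A)
    (Y := univ) (R := fun p y ↦ ε < dist (𝔼 i, g (y - p i)) (translateAvg A g y))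
    (w := 2 * exp (-(ε ^ 2 / 2 * k))) univ_nonempty (by positivity) fun y _ ↦ by
      rw [Fintype.card_piFinset_const, Nat.cast_pow]
      exact card_filter_lt_dist_expect_le hA (fun a ↦ hg (y - a)) hk hε
  rw [Fintype.card_piFinset_const, Nat.cast_pow, card_univ, ← mul_assoc] at hmarkov
  norm_num only at hmarkov
  exact hmarkov

-- Translating the sample `c` by `z` amounts to translating the argument of its empirical average,
-- so two good translates of the same sample give approximations of `translateAvg A g` and of its
-- translate by the same function.
theorem isAlmostPeriod_translateAvg_sub {δ B : ℝ} {c : Fin k → G} {x x₀ : G}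
    (hx : c + Function.const _ x ∈ goodSamples A g k δ B)
    (hx₀ : c + Function.const _ x₀ ∈ goodSamples A g k δ B) :
    IsAlmostPeriod (translateAvg A g) (2 * δ) (2 * B) (x₀ - x) := by
  have hclose {z : G} (hz : c + Function.const _ z ∈ goodSamples A g k δ B) :
      CloseOffFew δ B (fun y ↦ 𝔼 i, g (y - c i)) fun y ↦ translateAvg A g (y + z) := by
    simpa [add_sub_add_right_eq_sub] using
      (mem_filter.1 hz).2.comp_equiv (Equiv.addRight z)
  have hshift := ((hclose hx₀).symm.trans (hclose hx)).comp_equiv (Equiv.subRight x)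
  simpa [IsAlmostPeriod, two_mul, sub_add_eq_add_sub, add_sub_assoc] using hshift

theorem exists_isAlmostPeriod_translateAvg (hA : A.Nonempty) (hg : ∀ a, g a ∈ Set.Icc 0 1)
    (hk : k ≠ 0) (hε : 0 ≤ ε) :
    ∃ X : Finset G, X.Nonempty ∧
      (Fintype.card G : ℝ) / #X ≤ 2 * (Fintype.card G / #A) ^ k ∧
      ∀ x ∈ X, IsAlmostPeriod (translateAvg A g) (2 * ε)
        (8 * exp (-(ε ^ 2 / 2 * k)) * Fintype.card G) x := by
  set B := 4 * exp (-(ε ^ 2 / 2 * k)) * Fintype.card G with hB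
  set L := goodSamples A g k ε B
  classical
  obtain ⟨c, hc⟩ := exists_card_mul_card_le_card_mul_card_filter_add_mem
    (fun x : G ↦ Function.const (Fin k) x) L
  set X := ({x | c + Function.const _ x ∈ L} : Finset G)
  rw [Fintype.card_pi_const] at hc
  have : (0 : ℝ) < #A := mod_cast hA.card_pos
  have hlarge : (#A : ℝ) ^ k * Fintype.card G ≤ 2 * Fintype.card G ^ k * #X :=
    calc (#A : ℝ) ^ k * Fintype.card G
        ≤ 2 * #L * Fintype.card G := by
          gcongr
          exact card_pow_le_two_mul_card_goodSamples hA hg hk hε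
      _ = 2 * (Fintype.card G * #L : ℕ) := by push_cast; ring
      _ ≤ 2 * (Fintype.card G ^ k * #X : ℕ) := by gcongr
      _ = 2 * Fintype.card G ^ k * #X := by push_cast; ring
  have hX₀ : (0 : ℝ) < #X := by
    have : (0 : ℝ) < 2 * Fintype.card G ^ k * #X := hlarge.trans_lt' (by positivity)
    exact pos_of_mul_pos_right this (by positivity)
  obtain ⟨x₀, hx₀⟩ := card_pos.1 (Nat.cast_pos.1 hX₀)
  refine ⟨X.map (Equiv.subLeft x₀).toEmbedding, map_nonempty.2 ⟨x₀, hx₀⟩, ?_,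
    forall_mem_map.2 fun x hx ↦ ?_⟩
  · rw [card_map, div_pow, mul_div_assoc', div_le_div_iff₀ hX₀ (by positivity), mul_comm]
    exact hlarge
  · have hB₂ : 8 * exp (-(ε ^ 2 / 2 * k)) * Fintype.card G = 2 * B := by rw [hB]; ring
    rw [hB₂]
    exact isAlmostPeriod_translateAvg_sub (mem_filter.1 hx).2 (mem_filter.1 hx₀).2

end CrootSisask

end AlmostPeriods

section Fourier

open Finset Real
open scoped BigOperators

variable {G : Type*} [AddCommGroup G] {A : Finset G} {η : ℝ}

/-- The sum of a character over `A`: the unnormalised Fourier coefficient of the indicator function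
of `A` (at `-ψ` in the usual convention). -/
noncomputable def charSum (A : Finset G) (ψ : AddChar G ℂ) : ℂ :=
  ∑ a ∈ A, ψ a

theorem norm_charSum_le [Finite G] (A : Finset G) (ψ : AddChar G ℂ) : ‖charSum A ψ‖ ≤ #A :=
  (norm_sum_le _ _).trans_eq <| by
    simp only [AddChar.norm_apply, sum_const, nsmul_eq_mul, mul_one]

theorem sum_product_map_sub [Finite G] (A : Finset G) (ψ : AddChar G ℂ) :
    ∑ x ∈ A ×ˢ A, ψ (x.1 - x.2) = (‖charSum A ψ‖ : ℂ) ^ 2 := by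
  rw [← Complex.mul_conj', charSum, map_sum, sum_mul_sum, sum_product]
  simp_rw [sub_eq_add_neg, AddChar.map_add_eq_mul, AddChar.map_neg_eq_conj]

theorem addChar_map_sum {M ι : Type*} [CommMonoid M] (ψ : AddChar G M) (s : Finset ι)
    (z : ι → G) : ψ (∑ i ∈ s, z i) = ∏ i ∈ s, ψ (z i) :=
  map_prod ψ.toMonoidHom (fun i ↦ Multiplicative.ofAdd (z i)) s

theorem sum_piFinset_map_sum (X : Finset G) (t : ℕ) (ψ : AddChar G ℂ) :
    ∑ p ∈ Fintype.piFinset fun _ : Fin t ↦ X, ψ (∑ i, p i) = charSum X ψ ^ t := by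
  simp_rw [charSum, sum_pow', addChar_map_sum]

section Fintype

variable [Fintype G]

theorem sum_norm_charSum_sq (A : Finset G) :
    ∑ ψ, ‖charSum A ψ‖ ^ 2 = Fintype.card G * #A := by
  classical
  have hdiag : ∀ a ∈ A, ∑ b ∈ A, (if a - b = 0 then (Fintype.card G : ℂ) else 0) =
      Fintype.card G := fun a ha ↦ by
    simp_rw [sub_eq_zero, sum_ite_eq, if_pos ha]
  have hcomplex : ∑ ψ, (‖charSum A ψ‖ : ℂ) ^ 2 = #A * Fintype.card G := by
    simp_rw [← sum_product_map_sub]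
    rw [sum_comm]
    simp_rw [AddChar.sum_apply_eq_ite]
    rw [sum_product, sum_congr rfl hdiag, sum_const, nsmul_eq_mul]
  rw [mul_comm]
  exact_mod_cast hcomplex

theorem card_mul_card_filter_add_mem [DecidableEq G] {ι : Type*} (s : Finset ι) (z : ι → G)
    (D : Finset G) (v : G) :
    (Fintype.card G * #{i ∈ s | z i + v ∈ D} : ℂ) =
      ∑ ψ : AddChar G ℂ, ψ v * charSum D (-ψ) * ∑ i ∈ s, ψ (z i) := by
  have hterm (ψ : AddChar G ℂ) :
      ψ v * charSum D (-ψ) * ∑ i ∈ s, ψ (z i) = ∑ i ∈ s, ∑ d ∈ D, ψ (z i + v - d) := by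
    rw [charSum, mul_sum]
    refine sum_congr rfl fun i _ ↦ ?_
    rw [mul_right_comm, mul_sum]
    refine sum_congr rfl fun d _ ↦ ?_
    rw [sub_eq_add_neg, AddChar.map_add_eq_mul, AddChar.map_add_eq_mul, AddChar.neg_apply,
      mul_comm (ψ v)]
  simp_rw [hterm]
  rw [sum_comm]
  simp_rw [sum_comm (s := univ), AddChar.sum_apply_eq_ite, sub_eq_zero, sum_ite_eq]
  rw [← sum_filter, sum_const, nsmul_eq_mul, mul_comm]

end Fintype

theorem abs_card_filter_add_mem_sub_le [Finite G] [DecidableEq G] {ι : Type*} (s : Finset ι)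
    (z : ι → G) (D : Finset G) (v : G) :
    |(#{i ∈ s | z i + v ∈ D} - #{i ∈ s | z i ∈ D} : ℝ)| ≤
      ∑ ψ : AddChar G ℂ, ‖ψ v - 1‖ * ‖∑ i ∈ s, ψ (z i)‖ := by
  cases nonempty_fintype G
  have hzero := card_mul_card_filter_add_mem s z D 0
  simp_rw [add_zero, AddChar.map_zero_eq_one, one_mul] at hzero
  have hdiff : (Fintype.card G * (#{i ∈ s | z i + v ∈ D} - #{i ∈ s | z i ∈ D} : ℝ) : ℂ) =
      ∑ ψ : AddChar G ℂ, (ψ v - 1) * charSum D (-ψ) * ∑ i ∈ s, ψ (z i) := by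
    push_cast
    rw [mul_sub, card_mul_card_filter_add_mem, hzero, ← sum_sub_distrib]
    exact sum_congr rfl fun ψ _ ↦ by ring
  have hcard : (0 : ℝ) < Fintype.card G := mod_cast Fintype.card_pos
  refine le_of_mul_le_mul_left ?_ hcard
  calc Fintype.card G * |(#{i ∈ s | z i + v ∈ D} - #{i ∈ s | z i ∈ D} : ℝ)|
      = ‖∑ ψ : AddChar G ℂ, (ψ v - 1) * charSum D (-ψ) * ∑ i ∈ s, ψ (z i)‖ := by
        rw [← hdiff, norm_mul, Complex.norm_natCast, Complex.norm_real, Real.norm_eq_abs]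
    _ ≤ ∑ ψ : AddChar G ℂ, ‖ψ v - 1‖ * Fintype.card G * ‖∑ i ∈ s, ψ (z i)‖ := by
        refine norm_sum_le_of_le _ fun ψ _ ↦ ?_
        rw [norm_mul, norm_mul]
        gcongr
        exact (norm_charSum_le D _).trans (mod_cast card_le_univ D)
    _ = _ := by
        rw [mul_sum]
        exact sum_congr rfl fun ψ _ ↦ by ring

section LargeSpectrum

variable [Fintype G]

/-- The characters `ψ` whose sum over `A` is at least `η` times the trivial bound `#A`. -/
noncomputable def largeSpectrum (η : ℝ) (A : Finset G) : Finset (AddChar G ℂ) :=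
  {ψ | η * #A ≤ ‖charSum A ψ‖}

theorem mem_largeSpectrum {ψ : AddChar G ℂ} : ψ ∈ largeSpectrum η A ↔ η * #A ≤ ‖charSum A ψ‖ :=
  mem_filter_univ _

/-- **Rudin's inequality**: in exponential moments the characters of a dissociated set behave like
independent random variables. -/
theorem sum_exp_mul_sum_re_le {Δ : Finset (AddChar G ℂ)}
    (hΔ : AddDissociated (Δ : Set (AddChar G ℂ))) {c : AddChar G ℂ → ℂ} (hc : ∀ ψ, ‖c ψ‖ ≤ 1)
    (l : ℝ) :
    ∑ a, exp (l * ∑ ψ ∈ Δ, (c ψ * ψ a).re) ≤ Fintype.card G * exp (l ^ 2 / 2 * #Δ) := by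
  classical
  have hre (ψ : AddChar G ℂ) (a : G) : |(c ψ * ψ a).re| ≤ 1 :=
    (Complex.abs_re_le_norm _).trans <| by
      simpa only [norm_mul, AddChar.norm_apply, mul_one] using hc ψ
  set C : AddChar G ℂ → ℝ := fun ψ ↦ if ψ ∈ Δ then cosh l else 1 with hC
  set d : AddChar G ℂ → ℂ := fun ψ ↦ if ψ ∈ Δ then sinh l * c ψ else 0 with hd
  have hdissociated : AddDissociated {ψ | d ψ ≠ 0} :=
    hΔ.subset fun ψ hψ ↦ by_contra fun hψΔ ↦ hψ (if_neg hψΔ)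
  have hfactor (a : G) (ψ : AddChar G ℂ) : C ψ + (d ψ * ψ a).re =
      if ψ ∈ Δ then cosh l + (c ψ * ψ a).re * sinh l else 1 := by
    rw [hC, hd]
    dsimp only
    split_ifs
    · rw [mul_assoc, Complex.re_ofReal_mul, mul_comm (sinh l)]
    · rw [zero_mul, Complex.zero_re, add_zero]
  calc ∑ a, exp (l * ∑ ψ ∈ Δ, (c ψ * ψ a).re)
      = ∑ a, ∏ ψ ∈ Δ, exp ((c ψ * ψ a).re * l) := by
        simp_rw [← exp_sum, ← sum_mul, mul_comm l]
    _ ≤ ∑ a, ∏ ψ ∈ Δ, (cosh l + (c ψ * ψ a).re * sinh l) := by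
        gcongr with a _ ψ _
        exact exp_mul_le_cosh_add_mul_sinh (hre ψ a) l
    _ = Fintype.card G * 𝔼 a, ∏ ψ, (C ψ + (d ψ * ψ a).re) := by
        simp_rw [hfactor, Fintype.prod_ite_mem, Fintype.card_mul_expect]
    _ = Fintype.card G * cosh l ^ #Δ := by
        rw [hdissociated.randomisation, Fintype.prod_ite_mem, prod_const]
    _ ≤ Fintype.card G * exp (l ^ 2 / 2) ^ #Δ := by
        gcongr
        exact cosh_le_exp_half_sq l
    _ = Fintype.card G * exp (l ^ 2 / 2 * #Δ) := by rw [mul_comm _ (#Δ : ℝ), exp_nat_mul]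

theorem exp_expect_le_expect_exp {ι : Type*} {s : Finset ι} (hs : s.Nonempty) (f : ι → ℝ) :
    exp (𝔼 i ∈ s, f i) ≤ 𝔼 i ∈ s, exp (f i) := by
  have hcard : (#s : ℝ) ≠ 0 := mod_cast hs.card_ne_zero
  have hjensen := convexOn_exp.map_sum_le (t := s) (w := fun _ ↦ (#s : ℝ)⁻¹) (p := f)
    (fun _ _ ↦ by positivity) (by rw [sum_const, nsmul_eq_mul, mul_inv_cancel₀ hcard])
    fun _ _ ↦ Set.mem_univ _
  simpa only [smul_eq_mul, expect_eq_sum_div_card, div_eq_inv_mul, mul_sum] using hjensen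

/-- **Chang's theorem**, proved by comparing Jensen's lower bound with Rudin's upper bound for the
exponential moment of `∑ ψ ∈ Δ, Re (c ψ * ψ)`, where `c ψ` aligns the phase of `charSum A ψ`. -/
theorem card_le_of_addDissociated_of_subset_largeSpectrum (hA : A.Nonempty) (hη : 0 < η)
    {Δ : Finset (AddChar G ℂ)} (hΔ : AddDissociated (Δ : Set (AddChar G ℂ)))
    (hΔA : Δ ⊆ largeSpectrum η A) : (#Δ : ℝ) ≤ 2 / η ^ 2 * log (Fintype.card G / #A) := by
  have hcardA : (0 : ℝ) < #A := mod_cast hA.card_pos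
  have : (0 : ℝ) < Fintype.card G := mod_cast Fintype.card_pos
  choose c hc hphase using fun ψ ↦ (charSum A ψ).exists_norm_eq_mul_self
  set f : G → ℝ := fun a ↦ ∑ ψ ∈ Δ, (c ψ * ψ a).re with hf
  have hsum : ∑ a ∈ A, f a = ∑ ψ ∈ Δ, ‖charSum A ψ‖ := by
    rw [hf, sum_comm]
    refine sum_congr rfl fun ψ _ ↦ ?_
    rw [← Complex.re_sum, ← mul_sum, ← charSum, ← hphase, Complex.ofReal_re]
  have hmean : η * #Δ ≤ 𝔼 a ∈ A, f a := by
    rw [expect_eq_sum_div_card, hsum, le_div_iff₀ hcardA]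
    calc η * #Δ * #A = ∑ _ψ ∈ Δ, η * #A := by rw [sum_const, nsmul_eq_mul]; ring
      _ ≤ ∑ ψ ∈ Δ, ‖charSum A ψ‖ := sum_le_sum fun ψ hψ ↦ mem_largeSpectrum.1 (hΔA hψ)
  have hexp : exp (η ^ 2 * #Δ) ≤ Fintype.card G / #A * exp (η ^ 2 / 2 * #Δ) :=
    calc exp (η ^ 2 * #Δ) = exp (η * (η * #Δ)) := by rw [sq, mul_assoc]
      _ ≤ exp (η * 𝔼 a ∈ A, f a) := by gcongr
      _ ≤ 𝔼 a ∈ A, exp (η * f a) := by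
          rw [mul_expect]
          exact exp_expect_le_expect_exp hA _
      _ ≤ (∑ a, exp (η * f a)) / #A := by
          rw [expect_eq_sum_div_card]
          gcongr
          exact subset_univ A
      _ ≤ Fintype.card G * exp (η ^ 2 / 2 * #Δ) / #A := by
          gcongr
          exact sum_exp_mul_sum_re_le hΔ (fun ψ ↦ (hc ψ).le) η
      _ = Fintype.card G / #A * exp (η ^ 2 / 2 * #Δ) := by ring
  have hlog := log_le_log (exp_pos _) hexp
  rw [log_exp, log_mul (by positivity) (exp_ne_zero _), log_exp] at hlog
  rw [div_mul_eq_mul_div, le_div_iff₀ (by positivity)]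
  linarith

theorem exists_card_le_forall_largeSpectrum_apply_eq_one (hA : A.Nonempty) (hη : 0 < η) :
    ∃ Λ : Finset (AddChar G ℂ), (#Λ : ℝ) ≤ 2 / η ^ 2 * log (Fintype.card G / #A) ∧
      ∀ v, (∀ ψ ∈ Λ, ψ v = 1) → ∀ ψ ∈ largeSpectrum η A, ψ v = 1 := by
  classical
  obtain ⟨Λ, -, hΛ, hspan⟩ := exists_subset_addSpan_card_le_of_forall_addDissociated
    (s := largeSpectrum η A) fun Δ hΔA hΔ ↦
      Nat.le_floor (card_le_of_addDissociated_of_subset_largeSpectrum hA hη hΔ hΔA)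
  have hratio : 1 ≤ (Fintype.card G : ℝ) / #A := by
    rw [one_le_div (mod_cast hA.card_pos)]
    exact_mod_cast card_le_univ A
  have hlog := log_nonneg hratio
  refine ⟨Λ, (Nat.le_floor_iff (by positivity)).1 hΛ, fun v hv ψ hψ ↦ ?_⟩
  obtain ⟨e, -, rfl⟩ := mem_addSpan.1 (hspan hψ)
  rw [AddChar.sum_apply]
  refine prod_eq_one fun χ hχ ↦ ?_
  rw [AddChar.zsmul_apply, hv χ hχ, one_zpow]

end LargeSpectrum

end Fourier

section Bogolyubov

open Finset Real
open scoped BigOperators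

section Walks

variable {G : Type*} {A X : Finset G} {t : ℕ}

/-- The tuples `((a, b), x₁, …, x_t)` with `a, b ∈ A` and `x₁, …, x_t ∈ X`, over which the sums
`a - b + x₁ + ⋯ + x_t` are counted. -/
def walks (A X : Finset G) (t : ℕ) : Finset ((G × G) × (Fin t → G)) :=
  (A ×ˢ A) ×ˢ Fintype.piFinset fun _ ↦ X

theorem card_walks (A X : Finset G) (t : ℕ) : #(walks A X t) = #A ^ 2 * #X ^ t := by
  rw [walks, card_product, card_product, Fintype.card_piFinset_const, sq]

variable [AddCommGroup G]

/-- The sum `a - b + x₁ + ⋯ + x_t` attached to an element `((a, b), x₁, …, x_t)` of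
`walks A X t`. -/
def endpoint (w : (G × G) × (Fin t → G)) : G :=
  w.1.1 - w.1.2 + ∑ i, w.2 i

theorem sum_walks_endpoint [Finite G] (A X : Finset G) (t : ℕ) (ψ : AddChar G ℂ) :
    ∑ w ∈ walks A X t, ψ (endpoint w) = ‖charSum A ψ‖ ^ 2 * charSum X ψ ^ t := by
  simp_rw [walks, endpoint, AddChar.map_add_eq_mul, sum_product, ← mul_sum, sum_piFinset_map_sum,
    ← sum_mul, ← sum_product', sum_product_map_sub]

theorem abs_card_filter_endpoint_add_mem_sub_le [Fintype G] [DecidableEq G] {η : ℝ} (hη : 0 ≤ η)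
    {v : G} (hv : ∀ ψ ∈ largeSpectrum η X, ψ v = 1) (D : Finset G) :
    |(#{w ∈ walks A X t | endpoint w + v ∈ D} - #{w ∈ walks A X t | endpoint w ∈ D} : ℝ)| ≤
      2 * (η * #X) ^ t * (Fintype.card G * #A) := by
  refine (abs_card_filter_add_mem_sub_le _ endpoint D v).trans ?_
  rw [← sum_norm_charSum_sq, mul_sum]
  refine sum_le_sum fun ψ _ ↦ ?_
  rw [sum_walks_endpoint, norm_mul, norm_pow, norm_pow, Complex.norm_real, norm_norm]
  by_cases hψ : ψ ∈ largeSpectrum η X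
  · rw [hv ψ hψ, sub_self, norm_zero, zero_mul]
    positivity
  · rw [mem_largeSpectrum, not_le] at hψ
    have hnorm : ‖ψ v - 1‖ ≤ 2 := (norm_sub_le _ _).trans_eq <| by
      rw [AddChar.norm_apply, norm_one, one_add_one_eq_two]
    calc ‖ψ v - 1‖ * (‖charSum A ψ‖ ^ 2 * ‖charSum X ψ‖ ^ t)
        ≤ 2 * (‖charSum A ψ‖ ^ 2 * (η * #X) ^ t) := by gcongr
      _ = 2 * (η * #X) ^ t * ‖charSum A ψ‖ ^ 2 := by ring

end Walks

section DiffDensity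

variable {G : Type*} [AddCommGroup G] [DecidableEq G] {A X : Finset G} {t : ℕ} {δ B : ℝ}

/-- The proportion of the `a ∈ A` for which `y - a` is a difference of two elements of `A`. -/
noncomputable def diffDensity (A : Finset G) : G → ℝ :=
  translateAvg A fun y ↦ if y ∈ A - A then 1 else 0

theorem card_mul_diffDensity (A : Finset G) (y : G) :
    #A * diffDensity A y = #{a ∈ A | y - a ∈ A - A} := by
  rw [diffDensity, translateAvg, card_mul_expect, sum_boole]

theorem diffDensity_nonneg (A : Finset G) : 0 ≤ diffDensity A := fun y ↦
  expect_nonneg fun a _ ↦ by positivity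

theorem diffDensity_eq_one {a : G} (ha : a ∈ A) : diffDensity A a = 1 := by
  rw [diffDensity, translateAvg, expect_congr rfl fun b hb ↦ if_pos (sub_mem_sub ha hb)]
  exact expect_const ⟨a, ha⟩ 1

variable [Fintype G]

theorem mul_le_card_filter_sub_add_mem {s : G} (hδ : 0 ≤ δ)
    (hs : IsAlmostPeriod (diffDensity A) δ B s) :
    #A * (#A * (1 - δ) - B) ≤ #{x ∈ A ×ˢ A | x.1 - x.2 + s ∈ A - A} := by
  have hcount (a : G) : #A * diffDensity A (a + s) = #{b ∈ A | a - b + s ∈ A - A} := by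
    rw [card_mul_diffDensity]
    simp_rw [add_sub_right_comm]
  calc #A * (#A * (1 - δ) - B) ≤ #A * ∑ a ∈ A, diffDensity A (a + s) := by
        gcongr
        exact hs.le_sum hδ (diffDensity_nonneg A) fun a ↦ diffDensity_eq_one
    _ = ∑ a ∈ A, (#{b ∈ A | a - b + s ∈ A - A} : ℝ) := by simp_rw [mul_sum, hcount]
    _ = #{x ∈ A ×ˢ A | x.1 - x.2 + s ∈ A - A} := by simp_rw [← sum_boole, sum_product]

theorem mul_le_card_filter_endpoint_mem (hδ : 0 ≤ δ)
    (hX : ∀ x ∈ X, IsAlmostPeriod (diffDensity A) δ B x) :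
    #A * (#A * (1 - t * δ) - t * B) * #X ^ t ≤
      (#{w ∈ walks A X t | endpoint w ∈ A - A} : ℝ) := by
  have hperiod {p : Fin t → G} (hp : p ∈ Fintype.piFinset fun _ ↦ X) :
      IsAlmostPeriod (diffDensity A) (t * δ) (t * B) (∑ i, p i) := by
    simpa only [card_univ, Fintype.card_fin] using
      isAlmostPeriod_sum fun i (_ : i ∈ univ) ↦ hX _ (Fintype.mem_piFinset.1 hp i)
  calc #A * (#A * (1 - t * δ) - t * B) * #X ^ t
      = ∑ p ∈ Fintype.piFinset fun _ : Fin t ↦ X, #A * (#A * (1 - t * δ) - t * B) := by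
        rw [sum_const, Fintype.card_piFinset_const, nsmul_eq_mul, mul_comm, Nat.cast_pow]
    _ ≤ ∑ p ∈ Fintype.piFinset fun _ : Fin t ↦ X,
          (#{x ∈ A ×ˢ A | x.1 - x.2 + ∑ i, p i ∈ A - A} : ℝ) :=
        sum_le_sum fun p hp ↦ mul_le_card_filter_sub_add_mem (by positivity) (hperiod hp)
    _ = #{w ∈ walks A X t | endpoint w ∈ A - A} := by
        simp_rw [← sum_boole, walks, endpoint, sum_product_right]

theorem exists_isAlmostPeriod_diffDensity (hA : A.Nonempty) {K : ℝ}
    (hK : Fintype.card G ≤ K * #A) {k : ℕ} (ht : t ≠ 0)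
    (hk : 512 * t ^ 2 * log (64 * t * K) ≤ k) :
    ∃ X : Finset G, X.Nonempty ∧ Fintype.card G / #X ≤ 2 * K ^ k ∧
      ∀ x ∈ X, IsAlmostPeriod (diffDensity A) (1 / (8 * t)) (#A / (8 * t)) x := by
  have hA₀ : (0 : ℝ) < #A := mod_cast hA.card_pos
  have hK₁ : 1 ≤ K := le_of_mul_le_mul_right
    (by rw [one_mul]; exact hK.trans' (mod_cast card_le_univ A)) hA₀
  have ht₁ : (1 : ℝ) ≤ t := mod_cast Nat.one_le_iff_ne_zero.2 ht
  have hk₀ : k ≠ 0 := by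
    have := log_pos (show 1 < 64 * t * K by nlinarith)
    have : (0 : ℝ) < k := hk.trans_lt' (by positivity)
    exact_mod_cast this.ne'
  obtain ⟨X, hX₀, hXcard, hX⟩ := exists_isAlmostPeriod_translateAvg hA
    (g := fun y ↦ if y ∈ A - A then 1 else 0) (fun a ↦ by split_ifs <;> norm_num) hk₀
    (ε := 1 / (16 * t)) (by positivity)
  have hδ : 2 * (1 / (16 * t)) = 1 / (8 * t : ℝ) := by field_simp; norm_num
  have hexp : exp (-((1 / (16 * t)) ^ 2 / 2 * k)) ≤ (64 * t * K)⁻¹ := by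
    rw [← exp_log (show 0 < 64 * t * K by positivity), ← exp_neg, exp_le_exp, neg_le_neg_iff]
    field_simp
    linarith
  refine ⟨X, hX₀, hXcard.trans ?_, fun x hx ↦ ?_⟩
  · gcongr
    exact (div_le_iff₀ hA₀).2 hK
  · rw [← hδ]
    refine (hX x hx).mono ?_
    calc 8 * exp (-((1 / (16 * t)) ^ 2 / 2 * k)) * Fintype.card G
        ≤ 8 * (64 * t * K)⁻¹ * (K * #A) := by gcongr
      _ = #A / (8 * t) := by field_simp; norm_num

end DiffDensity

section AddSubSub

variable {G : Type*} [AddCommGroup G] [DecidableEq G] {A X : Finset G} {t : ℕ} {v : G}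

theorem mem_add_add_sub_sub_of_endpoint_mem {w : (G × G) × (Fin t → G)}
    (hw : endpoint w ∈ A - A) (hwv : endpoint w + v ∈ A - A) : v ∈ A + A - A - A := by
  have hA : A + A - A - A = A - A - (A - A) := by rw [sub_sub_eq_add_sub, sub_add_eq_add_sub]
  rw [hA]
  exact mem_sub.2 ⟨_, hwv, _, hw, add_sub_cancel_left _ v⟩

variable [Fintype G]

theorem mem_add_add_sub_sub_of_forall_largeSpectrum (hA : A.Nonempty) (hX₀ : X.Nonempty)
    (ht : t ≠ 0) (hX : ∀ x ∈ X, IsAlmostPeriod (diffDensity A) (1 / (8 * t)) (#A / (8 * t)) x)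
    {η : ℝ} (hη : 0 ≤ η) (htη : 16 * (η ^ t * Fintype.card G) ≤ #A)
    (hv : ∀ ψ ∈ largeSpectrum η X, ψ v = 1) : v ∈ A + A - A - A := by
  have : (0 : ℝ) < #A := mod_cast hA.card_pos
  have : (0 : ℝ) < #X := mod_cast hX₀.card_pos
  have hmany : 3 / 4 * (#A ^ 2 * #X ^ t) ≤ (#{w ∈ walks A X t | endpoint w ∈ A - A} : ℝ) :=
    calc 3 / 4 * ((#A : ℝ) ^ 2 * #X ^ t)
        = #A * (#A * (1 - t * (1 / (8 * t))) - t * (#A / (8 * t))) * #X ^ t := by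
          field_simp
          norm_num
      _ ≤ _ := mul_le_card_filter_endpoint_mem (by positivity) hX
  have hclose := calc
    |(#{w ∈ walks A X t | endpoint w + v ∈ A - A} - #{w ∈ walks A X t | endpoint w ∈ A - A} : ℝ)|
      ≤ 2 * (η * #X) ^ t * (Fintype.card G * #A) :=
        abs_card_filter_endpoint_add_mem_sub_le hη hv (A - A)
    _ = 16 * (η ^ t * Fintype.card G) * (#A * #X ^ t / 8) := by ring
    _ ≤ #A * (#A * #X ^ t / 8) := by gcongr
    _ = 1 / 8 * (#A ^ 2 * #X ^ t) := by ring
  have hpos : (0 : ℝ) < #A ^ 2 * #X ^ t := by positivity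
  have hoverlap : (#(walks A X t) : ℝ) <
      #{w ∈ walks A X t | endpoint w ∈ A - A} + #{w ∈ walks A X t | endpoint w + v ∈ A - A} := by
    rw [card_walks]
    push_cast
    linarith [neg_le_of_abs_le hclose]
  obtain ⟨w, hw⟩ := inter_nonempty_of_card_lt_card_add_card (filter_subset _ _)
    (filter_subset _ _) (mod_cast hoverlap)
  rw [mem_inter, mem_filter, mem_filter] at hw
  exact mem_add_add_sub_sub_of_endpoint_mem hw.1.2 hw.2.2

theorem exists_addChar_card_le_forall_mem_add_add_sub_sub (hA : A.Nonempty) {K : ℝ}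
    (hK : Fintype.card G ≤ K * #A) {k : ℕ} (ht : t ≠ 0) (htK : 16 * K ≤ 2 ^ t)
    (hk : 512 * t ^ 2 * log (64 * t * K) ≤ k) :
    ∃ Λ : Finset (AddChar G ℂ), #Λ ≤ 8 * (log 2 + k * log K) ∧
      ∀ v, (∀ ψ ∈ Λ, ψ v = 1) → v ∈ A + A - A - A := by
  have hA₀ : (0 : ℝ) < #A := mod_cast hA.card_pos
  have hG₀ : (0 : ℝ) < Fintype.card G := mod_cast Fintype.card_pos
  have hK₀ : 0 < K := pos_of_mul_pos_left (hG₀.trans_le hK) hA₀.le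
  obtain ⟨X, hX₀, hXcard, hX⟩ := exists_isAlmostPeriod_diffDensity hA hK ht hk
  have : (0 : ℝ) < #X := mod_cast hX₀.card_pos
  obtain ⟨Λ, hΛ, hspan⟩ := exists_card_le_forall_largeSpectrum_apply_eq_one hX₀
    (η := 1 / 2) (by norm_num)
  refine ⟨Λ, ?_, fun v hv ↦ mem_add_add_sub_sub_of_forall_largeSpectrum hA hX₀ ht hX
    (by norm_num) ?_ (hspan v hv)⟩
  · calc (#Λ : ℝ) ≤ 2 / (1 / 2) ^ 2 * log (Fintype.card G / #X) := hΛ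
      _ ≤ 2 / (1 / 2) ^ 2 * log (2 * K ^ k) := by gcongr
      _ = 8 * (log 2 + k * log K) := by
        rw [log_mul two_ne_zero (by positivity), log_pow]
        norm_num
  · calc 16 * ((1 / 2) ^ t * Fintype.card G) ≤ 16 * ((1 / 2) ^ t * (K * #A)) := by gcongr
      _ = 16 * K * (1 / 2) ^ t * #A := by ring
      _ ≤ 2 ^ t * (1 / 2) ^ t * #A := by gcongr
      _ = #A := by rw [← mul_pow]; norm_num

end AddSubSub

section Parameters

variable {K : ℝ} {t : ℕ}

theorem one_le_logb_two_mul (hK : 1 ≤ K) : 1 ≤ logb 2 (2 * K) := by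
  rw [le_logb_iff_rpow_le one_lt_two (by positivity), rpow_one]
  linarith

theorem log_two_mul_le_logb (hK : 1 ≤ K) : log (2 * K) ≤ logb 2 (2 * K) := by
  rw [logb]
  exact le_div_self (log_nonneg (by linarith)) (log_pos one_lt_two) (by linarith [log_two_lt_d9])

theorem sixteen_mul_le_two_pow (hK : 1 ≤ K) (ht : logb 2 (2 * K) + 3 ≤ t) : 16 * K ≤ 2 ^ t :=
  calc 16 * K = 2 ^ (logb 2 (2 * K) + 3) := by
        rw [rpow_add two_pos, rpow_logb two_pos (by norm_num) (by positivity)]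
        norm_num
        ring
    _ ≤ 2 ^ (t : ℝ) := rpow_le_rpow_of_exponent_le one_le_two ht
    _ = 2 ^ t := rpow_natCast 2 t

theorem log_mul_mul_le (hK : 1 ≤ K) (ht : 0 < t) (htL : t ≤ 5 * logb 2 (2 * K)) :
    log (64 * t * K) ≤ 11 * logb 2 (2 * K) := by
  have ht₀ : (0 : ℝ) < t := mod_cast ht
  have hsplit : log (64 * t * K) = 5 * log 2 + log t + log (2 * K) := by
    rw [show 64 * t * K = 2 ^ 5 * t * (2 * K) by ring, log_mul (by positivity) (by positivity),
      log_mul (by positivity) (by positivity), log_pow]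
    norm_num
  linarith [log_le_sub_one_of_pos ht₀, log_two_lt_d9, log_two_mul_le_logb hK,
    one_le_logb_two_mul hK]

theorem exists_nat_parameters (hK : 1 ≤ K) :
    ∃ t k : ℕ, t ≠ 0 ∧ 16 * K ≤ 2 ^ t ∧ 512 * t ^ 2 * log (64 * t * K) ≤ k ∧
      8 * (log 2 + k * log K) ≤ 2000000 * logb 2 (2 * K) ^ 4 := by
  set L := logb 2 (2 * K)
  have hL : 1 ≤ L := one_le_logb_two_mul hK
  set t := ⌈L⌉₊ + 3 with ht
  have hLt : L + 3 ≤ t := by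
    rw [ht]
    push_cast
    linarith [Nat.le_ceil L]
  have htL : (t : ℝ) ≤ 5 * L := by
    rw [ht]
    push_cast
    linarith [Nat.ceil_lt_add_one (zero_le_one.trans hL)]
  have hlog : 0 ≤ log (64 * t * K) := log_nonneg <| by nlinarith
  set k := ⌈512 * t ^ 2 * log (64 * t * K)⌉₊
  have hk : (k : ℝ) ≤ 140801 * L ^ 3 :=
    calc (k : ℝ) ≤ 512 * t ^ 2 * log (64 * t * K) + 1 := (Nat.ceil_lt_add_one (by positivity)).le
      _ ≤ 512 * (5 * L) ^ 2 * (11 * L) + 1 ^ 3 := by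
          rw [one_pow]
          gcongr
          exact log_mul_mul_le hK (by omega) htL
      _ ≤ 512 * (5 * L) ^ 2 * (11 * L) + L ^ 3 := by gcongr
      _ = 140801 * L ^ 3 := by ring
  refine ⟨t, k, by omega, sixteen_mul_le_two_pow hK hLt, Nat.le_ceil _, ?_⟩
  calc 8 * (log 2 + k * log K) ≤ 8 * (1 ^ 4 + 140801 * L ^ 3 * L) := by
        gcongr
        · linarith [log_two_lt_d9]
        · exact log_nonneg hK
        · exact (log_le_log (by positivity) (by linarith)).trans (log_two_mul_le_logb hK)
    _ ≤ 8 * (L ^ 4 + 140801 * L ^ 3 * L) := by gcongr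
    _ ≤ 2000000 * L ^ 4 := by nlinarith [pow_pos (zero_lt_one.trans_le hL) 4]

end Parameters

end Bogolyubov

section CommonKernel

open Finset

variable {G R : Type*} [AddCommGroup G] [CommRing R]

theorem index_ker_addChar_le [IsDomain R] {m : ℕ} [NeZero m] (hm : ∀ x : G, m • x = 0)
    (ψ : AddChar G R) : ψ.toAddMonoidHom.ker.index ≤ m := by
  let φ : G →+ Additive Rˣ := MonoidHom.toAdditiveRight ψ.toMonoidHom.toHomUnits
  have hφ (x : G) : ((φ x).toMul : R) = ψ x := rfl
  have hker : φ.ker = ψ.toAddMonoidHom.ker := by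
    ext x
    rw [AddMonoidHom.mem_ker, AddMonoidHom.mem_ker, ← toMul_eq_one, ← Units.val_eq_one, hφ]
    rfl
  have hrange : φ.range ≤ (rootsOfUnity m R).toAddSubgroup := by
    rintro _ ⟨x, rfl⟩
    change (φ x).toMul ∈ rootsOfUnity m R
    rw [mem_rootsOfUnity', hφ, ← AddChar.map_nsmul_eq_pow, hm, AddChar.map_zero_eq_one]
  rw [← hker, AddSubgroup.index_ker]
  have : Finite ((rootsOfUnity m R).toAddSubgroup) := inferInstanceAs (Finite (rootsOfUnity m R))
  exact (AddSubgroup.card_le_of_le hrange).trans (card_rootsOfUnity R m)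

/-- The annihilator of `Λ`: the subgroup on which all characters in `Λ` are trivial. -/
def commonKernel (Λ : Finset (AddChar G R)) : AddSubgroup G :=
  ⨅ ψ : Λ, ψ.1.toAddMonoidHom.ker

theorem mem_commonKernel {Λ : Finset (AddChar G R)} {v : G} :
    v ∈ commonKernel Λ ↔ ∀ ψ ∈ Λ, ψ v = 1 := by
  simp only [commonKernel, AddSubgroup.mem_iInf, Subtype.forall]
  rfl

theorem index_commonKernel_le [IsDomain R] {m : ℕ} [NeZero m] (hm : ∀ x : G, m • x = 0)
    (Λ : Finset (AddChar G R)) : (commonKernel Λ).index ≤ m ^ #Λ := by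
  refine (AddSubgroup.index_iInf_le _).trans ?_
  simpa using prod_le_pow_card univ (fun ψ : Λ ↦ ψ.1.toAddMonoidHom.ker.index) m
    fun ψ _ ↦ index_ker_addChar_le hm ψ.1

theorem finrank_le_add_of_index_toAddSubgroup_le {F E : Type*} [Field F] [Finite F]
    [AddCommGroup E] [Module F E] [Module.Finite F E] {V : Submodule F E} {d : ℕ}
    (hV : V.toAddSubgroup.index ≤ Nat.card F ^ d) :
    Module.finrank F E ≤ d + Module.finrank F V := by
  have hquot : Nat.card F ^ Module.finrank F (E ⧸ V) ≤ Nat.card F ^ d := by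
    rw [← Module.natCard_eq_pow_finrank]
    exact hV
  rw [← V.finrank_quotient_add_finrank]
  gcongr
  exact (Nat.pow_le_pow_iff_right Finite.one_lt_card).1 hquot

end CommonKernel

section General

open Finset Real Module

theorem quasipolynomial_bogolyubov_ruzsa_general {p : ℕ} [Fact p.Prime] {E : Type*}
    [AddCommGroup E] [Module (ZMod p) E] [Finite E] [DecidableEq E] {α : ℝ} (hα : 0 < α)
    {A : Finset E} (hA : α * Nat.card E ≤ #A) :
    ∃ V : Submodule (ZMod p) E, (∀ v ∈ V, v ∈ A + A - A - A) ∧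
      (finrank (ZMod p) E : ℝ) - finrank (ZMod p) V ≤ 2000000 * logb 2 (2 / α) ^ 4 := by
  cases nonempty_fintype E
  rw [Nat.card_eq_fintype_card] at hA
  have hE : (0 : ℝ) < Fintype.card E := mod_cast Fintype.card_pos
  have hA₀ : A.Nonempty := card_pos.1 <| mod_cast (mul_pos hα hE).trans_le hA
  have hα₁ : α ≤ 1 := le_of_mul_le_mul_right
    (by rw [one_mul]; exact hA.trans (mod_cast card_le_univ A)) hE
  have hK : Fintype.card E ≤ α⁻¹ * (#A : ℝ) := (le_inv_mul_iff₀ hα).2 hA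
  obtain ⟨t, k, ht, htK, hk, hbound⟩ := exists_nat_parameters ((one_le_inv₀ hα).2 hα₁)
  obtain ⟨Λ, hΛ, hmem⟩ :=
    exists_addChar_card_le_forall_mem_add_add_sub_sub hA₀ hK ht htK hk
  refine ⟨AddSubgroup.toZModSubmodule p (commonKernel Λ),
    fun v hv ↦ hmem v (mem_commonKernel.1 hv), ?_⟩
  have hcodim := finrank_le_add_of_index_toAddSubgroup_le (F := ZMod p)
    (V := AddSubgroup.toZModSubmodule p (commonKernel Λ))
    (by simpa using index_commonKernel_le (ZModModule.char_nsmul_eq_zero p) Λ)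
  rw [sub_le_iff_le_add, div_eq_mul_inv]
  refine (Nat.cast_le.2 hcodim).trans ?_
  push_cast
  gcongr
  exact hΛ.trans hbound

end General

theorem add_add_sub_sub_eq_add_add_add {E : Type*} [AddCommGroup E] [Module (ZMod 2) E]
    [DecidableEq E] (A : Finset E) : A + A - A - A = A + A + A + A := by
  have hneg : -A = A := by
    ext
    simp only [Finset.mem_neg', ZModModule.neg_eq_self]
  simp only [sub_eq_add_neg, hneg]

theorem quasipolynomial_bogolyubov_ruzsa :
    ∃ C : ℝ, 0 < C ∧
      ∀ (n : ℕ) (α : ℝ), 0 < α → α ≤ 1 →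
        ∀ A : Finset (Fin n → ZMod 2), α * 2 ^ n ≤ (A.card : ℝ) →
          ∃ V : Submodule (ZMod 2) (Fin n → ZMod 2),
            (∀ v ∈ V, v ∈ A + A + A + A) ∧
            (n : ℝ) - Module.finrank (ZMod 2) V ≤ C * (Real.logb 2 (2 / α)) ^ 4 := by
  refine ⟨2000000, by norm_num, fun n α hα _ A hA ↦ ?_⟩
  simpa [add_add_sub_sub_eq_add_add_add] using
    quasipolynomial_bogolyubov_ruzsa_general (p := 2) hα (A := A) (by simpa using hA)
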